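/- Let S be a finite semigroup in which every idempotent is a right zero (i.e., s·e = e for every s ∈ S and every idempotent e ∈ S). Then for every integer k > |S|, S satisfies the identity y·x_1⋯x_k = x_1⋯x_k: for all y, x_1, …, x_k ∈ S, y·x_1⋯x_k = x_1⋯x_k. -/

import Mathlib

/-- `sprod f a b` is the product `f a * f (a+1) * ⋯ * f b` in a semigroup (for `a ≤ b`). -/
def sprod {S : Type*} [Semigroup S] (f : ℕ → S) (a b : ℕ) : S :=
  (List.range (b - a)).foldl (fun x r => x * f (a + r + 1)) (f a)

theorem sprod_step {S : Type*} [Semigroup S] (x : ℕ → S) (n : ℕ) :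
    sprod x 1 (n + 1 + 1) = sprod x 1 (n + 1) * x (1 + n + 1) := by
  simp [sprod, List.range_succ]

theorem sprod_split {S : Type*} [Semigroup S] (x : ℕ → S) (i d : ℕ) :
    ∃ w : S, sprod x 1 (i + d + 1 + 1) = sprod x 1 (i + 1) * w := by
  induction d with
  | zero => exact ⟨_, sprod_step x i⟩
  | succ d ih =>
    obtain ⟨w, hw⟩ := ih
    refine ⟨w * x (1 + (i + d + 1) + 1), ?_⟩
    rw [← mul_assoc, ← hw]
    exact sprod_step x (i + d + 1)

theorem exists_idem_stab {S : Type*} [Semigroup S] [Finite S] (p w : S) (hw : p * w = p) :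
    ∃ e : S, p * e = p ∧ e * e = e := by
  letI : TopologicalSpace S := ⊥
  haveI : DiscreteTopology S := ⟨rfl⟩
  obtain ⟨e, he, hee⟩ := exists_idempotent_in_compact_subsemigroup
    (fun r : S => continuous_of_discreteTopology) {v : S | p * v = p} ⟨w, hw⟩
    (Set.toFinite _).isCompact
    (fun a ha b hb => by
      simp only [Set.mem_setOf_eq] at ha hb ⊢
      rw [← mul_assoc, ha, hb])
  exact ⟨e, he, hee⟩

/-- If every idempotent of a finite semigroup `S` is a right zero, then for every `k > |S|`
the semigroup `S` satisfies the identity `y * x 1 * ⋯ * x k = x 1 * ⋯ * x k`. -/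
theorem statement15 {S : Type*} [Semigroup S] [Fintype S]
    (h : ∀ e s : S, e * e = e → s * e = e) :
    ∀ k : ℕ, Fintype.card S < k →
      ∀ (y : S) (x : ℕ → S), y * sprod x 1 k = sprod x 1 k := by
  intro k hk y x
  obtain ⟨i, j, hij, hp⟩ : ∃ i j : Fin k, i < j ∧ sprod x 1 (i + 1) = sprod x 1 (j + 1) := by
    obtain ⟨i, j, hne, he⟩ := Fintype.exists_ne_map_eq_of_card_lt
      (fun i : Fin k => sprod x 1 (i + 1)) (by simpa using hk)
    rcases lt_or_gt_of_ne hne with hl | hl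
    · exact ⟨i, j, hl, he⟩
    · exact ⟨j, i, hl, he.symm⟩
  have hij' : (i : ℕ) < j := hij
  obtain ⟨w, hw⟩ := sprod_split x i (j - i - 1)
  rw [show (i : ℕ) + (j - i - 1) + 1 + 1 = j + 1 by omega, ← hp] at hw
  obtain ⟨e, he, hee⟩ := exists_idem_stab _ w hw.symm
  have hpe : e = sprod x 1 (i + 1) := (h e _ hee).symm.trans he
  have hy : y * sprod x 1 (i + 1) = sprod x 1 (i + 1) := by
    rw [← hpe]; exact h e y hee
  have hjk := j.isLt
  obtain ⟨v, hv⟩ := sprod_split x i (k - i - 2)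
  rw [show (i : ℕ) + (k - i - 2) + 1 + 1 = k by omega] at hv
  rw [hv, ← mul_assoc, hy]
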